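/- Let p ≥ 5 be a prime number. The rectangular simplex Δ(2, 3, p) ⊂ ℝ³ is maximally non-normal (i.e. μ_norm(Δ(2, 3, p)) = 2) if and only if p ≡ −1 (mod 3), i.e. p ≡ 2 (mod 3). -/

import Mathlib

/-- A point of `ℝⁿ` is a lattice point if all its coordinates are integers. -/
def IsLatticePoint {n : ℕ} (x : Fin n → ℝ) : Prop := ∀ i, ∃ z : ℤ, x i = (z : ℝ)

/-- The `k`-th dilation `kS = {k • x : x ∈ S}` of a set `S ⊆ ℝⁿ`. -/
def dilate {n : ℕ} (k : ℕ) (P : Set (Fin n → ℝ)) : Set (Fin n → ℝ) :=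
  (fun x => (k : ℝ) • x) '' P

/-- Every lattice point of `kP` is a sum of `k` lattice points of `P`. -/
def IsIDP {n : ℕ} (k : ℕ) (P : Set (Fin n → ℝ)) : Prop :=
  ∀ x ∈ dilate k P, IsLatticePoint x →
    ∃ f : Fin k → (Fin n → ℝ), (∀ i, f i ∈ P ∧ IsLatticePoint (f i)) ∧ x = ∑ i, f i

/-- A polytope is normal if for every `k ≥ 1` every lattice point of `kP`
is a sum of `k` lattice points of `P`. -/
def IsNormal {n : ℕ} (P : Set (Fin n → ℝ)) : Prop := ∀ k : ℕ, 1 ≤ k → IsIDP k P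

/-- A polytope is very ample if there is `k₀` such that for every `k ≥ k₀` every
lattice point of `kP` is a sum of `k` lattice points of `P`. -/
def IsVeryAmple {n : ℕ} (P : Set (Fin n → ℝ)) : Prop :=
  ∃ k₀ : ℕ, ∀ k : ℕ, k₀ ≤ k → IsIDP k P

/-- The rectangular simplex `Δ(λ) = conv{0, λ₁e₁, …, λₙeₙ}`. -/
def rectSimplex {n : ℕ} (lam : Fin n → ℕ) : Set (Fin n → ℝ) :=
  convexHull ℝ (insert 0 (Set.range fun i => Pi.single i ((lam i : ℝ))))

/-- An edge of `P`: a segment between two distinct extreme points of `P`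
which is an extreme subset of `P`. -/
def IsEdge {n : ℕ} (P : Set (Fin n → ℝ)) (v w : Fin n → ℝ) : Prop :=
  v ≠ w ∧ v ∈ P.extremePoints ℝ ∧ w ∈ P.extremePoints ℝ ∧
    IsExtreme ℝ P (segment ℝ v w)

/-- `P` has at least `k` lattice points on every edge. -/
def LPE {n : ℕ} (k : ℕ) (P : Set (Fin n → ℝ)) : Prop :=
  ∀ v w, IsEdge P v w →
    ∃ S : Finset (Fin n → ℝ), k ≤ S.card ∧ ∀ x ∈ S, x ∈ segment ℝ v w ∧ IsLatticePoint x

/-- The normality index: the least `k₀` such that `kP` is normal for all `k ≥ k₀`. -/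
noncomputable def munorm {n : ℕ} (P : Set (Fin n → ℝ)) : ℕ :=
  sInf {k₀ : ℕ | ∀ k : ℕ, k₀ ≤ k → IsNormal (dilate k P)}

/-- Almost 1-normality: with `L = lcm λᵢ`, `Lᵢ = L/λᵢ`, `d = gcd Lᵢ`, the number
`L - d` lies in the additive submonoid of `ℕ` generated by the `Lᵢ`. -/
def IsA1N {n : ℕ} (lam : Fin n → ℕ) : Prop :=
  Finset.univ.lcm lam - Finset.univ.gcd (fun i => Finset.univ.lcm lam / lam i) ∈
    AddSubmonoid.closure (Set.range fun i => Finset.univ.lcm lam / lam i)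

/-!
Write the weight of a lattice vector `a` as `∑ aᵢ / λᵢ`, so that `a` lies in `kΔ(λ)` iff its weight
is at most `k`. A vector of weight at most `k(m + 1)` splits into parts of weights at most `k` and
`km` as soon as `n ≤ km + 1`: if the quotients `⌊aᵢ / λᵢ⌋` add up to at least `k`, remove integer
multiples of the vertices `λᵢeᵢ` of total weight exactly `k`; otherwise the weight is at most
`(k - 1) + n - ∑ 1 / λᵢ`, and removing a maximal part of weight at most `k` leaves less than
`n - 1 ≤ km`. Hence `kΔ(λ)` is normal for `k ≥ n - 1`, and for `n = 3` normality of `Δ(λ)` only has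
to be tested on vectors of weight at most `2`.

For `λ = (2, 3, p)` the only such vectors that are not trivially decomposable are `(1, 2, c)` with
`c ≤ 5p / 6`. Splitting off `(1, 0, ·)` leaves room for `⌊p / 2⌋ + ⌊p / 3⌋` in the last coordinate,
which falls short of `⌊5p / 6⌋` exactly when `p ≡ 5 (mod 6)`, and then no other splitting does
better.
-/

section Dilation

variable {n : ℕ} {P : Set (Fin n → ℝ)}

lemma dilate_one (P : Set (Fin n → ℝ)) : dilate 1 P = P := by
  simp [dilate]

lemma dilate_dilate (m k : ℕ) (P : Set (Fin n → ℝ)) : dilate m (dilate k P) = dilate (k * m) P := by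
  simp only [dilate, Set.image_image, smul_smul, Nat.cast_mul, mul_comm]

open scoped Pointwise in
lemma mem_dilate_iff {k : ℕ} (hk : k ≠ 0) {x : Fin n → ℝ} : x ∈ dilate k P ↔ (k : ℝ)⁻¹ • x ∈ P :=
  Set.mem_smul_set_iff_inv_smul_mem₀ (Nat.cast_ne_zero.mpr hk) P x

lemma isIDP_one (P : Set (Fin n → ℝ)) : IsIDP 1 P := by
  intro x hx hlat
  rw [dilate_one] at hx
  exact ⟨fun _ => x, fun _ => ⟨hx, hlat⟩, by simp⟩

lemma munorm_le_iff (hP : ∃ k₀, ∀ k, k₀ ≤ k → IsNormal (dilate k P)) {k : ℕ} :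
    munorm P ≤ k ↔ ∀ j, k ≤ j → IsNormal (dilate j P) :=
  ⟨fun h j hj => Nat.sInf_mem hP j (h.trans hj), fun h => Nat.sInf_le h⟩

lemma IsLatticePoint.exists_eq_natCast {x : Fin n → ℝ} (hx : IsLatticePoint x) (h0 : ∀ i, 0 ≤ x i) :
    ∃ a : Fin n → ℕ, x = fun i => (a i : ℝ) := by
  choose z hz using hx
  have hz0 (i : Fin n) : 0 ≤ z i := by exact_mod_cast hz i ▸ h0 i
  lift z to Fin n → ℕ using hz0
  exact ⟨z, funext fun i => by simpa using hz i⟩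

lemma isLatticePoint_natCast (a : Fin n → ℕ) : IsLatticePoint fun i => (a i : ℝ) :=
  fun i => ⟨a i, by simp⟩

end Dilation

section RectSimplex

variable {n : ℕ} {lam : Fin n → ℕ}

theorem mem_rectSimplex_iff (hlam : ∀ i, lam i ≠ 0) {x : Fin n → ℝ} :
    x ∈ rectSimplex lam ↔ (∀ i, 0 ≤ x i) ∧ ∑ i, x i / lam i ≤ 1 := by
  constructor
  · have hlin : IsLinearMap ℝ fun y : Fin n → ℝ => ∑ i, y i / lam i :=
      ⟨fun y z => by simp [add_div, Finset.sum_add_distrib],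
        fun c y => by simp [mul_div_assoc, Finset.mul_sum]⟩
    refine fun hx => convexHull_min ?_ ((convex_Ici 0).inter (convex_halfSpace_le hlin 1)) hx
    rintro _ (rfl | ⟨i, rfl⟩)
    · simp
    · refine ⟨by simp, ?_⟩
      simp [Pi.single_apply, ite_div, hlam i]
  · rintro ⟨h0, h1⟩
    let coeff : Option (Fin n) → ℝ := fun o => o.elim (1 - ∑ i, x i / lam i) fun i => x i / lam i
    let vertex : Option (Fin n) → Fin n → ℝ := fun o => o.elim 0 fun i => Pi.single i (lam i : ℝ)
    have hx : ∑ o, coeff o • vertex o = x := by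
      ext j
      simp [coeff, vertex, Finset.sum_apply, Pi.single_apply, hlam j]
    rw [← hx]
    refine (convex_convexHull ℝ _).sum_mem ?_ (by simp [coeff]) ?_
    · rintro (_ | i) -
      · exact sub_nonneg.mpr h1
      · exact div_nonneg (h0 i) (Nat.cast_nonneg _)
    · rintro (_ | i) -
      · exact subset_convexHull ℝ _ (Set.mem_insert _ _)
      · exact subset_convexHull ℝ _ (Set.mem_insert_of_mem _ ⟨i, rfl⟩)

theorem mem_dilate_rectSimplex_iff (hlam : ∀ i, lam i ≠ 0) {k : ℕ} (hk : k ≠ 0) {x : Fin n → ℝ} :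
    x ∈ dilate k (rectSimplex lam) ↔ (∀ i, 0 ≤ x i) ∧ ∑ i, x i / lam i ≤ k := by
  have hk' : (0 : ℝ) < k := by positivity
  simp [mem_dilate_iff hk, mem_rectSimplex_iff hlam, mul_div_assoc, ← Finset.mul_sum,
    inv_mul_le_iff₀, hk']

/-- The weight `∑ aᵢ / λᵢ` of a lattice vector `a` of the orthant; it is the least real `t` with
`a ∈ tΔ(λ)`. -/
noncomputable def latticeWeight (lam : Fin n → ℕ) : (Fin n → ℕ) →+ ℝ where
  toFun a := ∑ i, (a i : ℝ) / lam i
  map_zero' := by simp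
  map_add' a b := by simp [add_div, Finset.sum_add_distrib]

lemma latticeWeight_apply (lam a : Fin n → ℕ) : latticeWeight lam a = ∑ i, (a i : ℝ) / lam i := rfl

lemma latticeWeight_single (lam : Fin n → ℕ) (i : Fin n) (c : ℕ) :
    latticeWeight lam (Pi.single i c) = c / lam i := by
  simp [latticeWeight_apply, Pi.single_apply, ite_div]

lemma natCast_mem_dilate_rectSimplex_iff (hlam : ∀ i, lam i ≠ 0) {k : ℕ} (hk : k ≠ 0)
    {a : Fin n → ℕ} :
    (fun i => (a i : ℝ)) ∈ dilate k (rectSimplex lam) ↔ latticeWeight lam a ≤ k := by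
  simp [mem_dilate_rectSimplex_iff hlam hk, latticeWeight_apply]

theorem isIDP_dilate_rectSimplex_iff (hlam : ∀ i, lam i ≠ 0) {k m : ℕ} (hk : k ≠ 0) (hm : m ≠ 0) :
    IsIDP m (dilate k (rectSimplex lam)) ↔ ∀ a, latticeWeight lam a ≤ k * m →
      ∃ f : Fin m → Fin n → ℕ, (∀ j, latticeWeight lam (f j) ≤ k) ∧ a = ∑ j, f j := by
  have hkm := mul_ne_zero hk hm
  rw [IsIDP, dilate_dilate]
  constructor
  · intro h a ha
    have hmem : (fun i => (a i : ℝ)) ∈ dilate (k * m) (rectSimplex lam) :=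
      (natCast_mem_dilate_rectSimplex_iff hlam hkm).mpr (by simpa using ha)
    obtain ⟨g, hg, hsum⟩ := h _ hmem (isLatticePoint_natCast a)
    choose f hf using fun j =>
      (hg j).2.exists_eq_natCast ((mem_dilate_rectSimplex_iff hlam hk).mp (hg j).1).1
    refine ⟨f, fun j => (natCast_mem_dilate_rectSimplex_iff hlam hk).mp (hf j ▸ (hg j).1), ?_⟩
    ext i
    have hi := congrFun hsum i
    simp only [hf, Finset.sum_apply] at hi
    rw [Finset.sum_apply]
    exact_mod_cast hi
  · intro h x hx hlat
    obtain ⟨a, rfl⟩ := hlat.exists_eq_natCast ((mem_dilate_rectSimplex_iff hlam hkm).mp hx).1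
    obtain ⟨f, hf, rfl⟩ :=
      h a (by simpa using (natCast_mem_dilate_rectSimplex_iff hlam hkm).mp hx)
    exact ⟨fun j i => f j i, fun j => ⟨(natCast_mem_dilate_rectSimplex_iff hlam hk).mpr (hf j),
      isLatticePoint_natCast _⟩, by ext i; simp⟩

end RectSimplex

section Splitting

variable {n : ℕ} {lam : Fin n → ℕ}

lemma exists_add_eq_latticeWeight_eq (hlam : ∀ i, lam i ≠ 0) {a : Fin n → ℕ} {k : ℕ}
    (hk : k ≤ ∑ i, a i / lam i) : ∃ b c, b + c = a ∧ latticeWeight lam b = k := by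
  obtain ⟨q, hqa, hq⟩ := Finsupp.exists_le_degree_eq
    (Finsupp.equivFunOnFinite.symm fun i => a i / lam i) k
    (by simpa [Finsupp.degree_eq_sum] using hk)
  have hba : (fun i => lam i * q i) ≤ a := fun i =>
    (Nat.mul_le_mul_left _ (hqa i)).trans (Nat.mul_div_le _ _)
  obtain ⟨c, hc⟩ := exists_add_of_le hba
  refine ⟨_, c, hc.symm, ?_⟩
  simp [latticeWeight_apply, hlam, ← hq, Finsupp.degree_eq_sum]

lemma exists_add_eq_latticeWeight_le_lt {a : Fin n → ℕ} {t : ℝ} (ht : 0 ≤ t)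
    (ha : t < latticeWeight lam a) :
    ∃ b c i, b + c = a ∧ latticeWeight lam b ≤ t ∧ t < latticeWeight lam b + 1 / lam i := by
  obtain ⟨b, ⟨hba, hbt⟩, hmax⟩ := ((Set.finite_Iic a).inter_of_left
    {b | latticeWeight lam b ≤ t}).exists_maximal ⟨0, by simp, by simpa using ht⟩
  rw [Set.mem_Iic] at hba
  rw [Set.mem_ofPred_eq] at hbt
  obtain ⟨i, hi⟩ : ∃ i, b i < a i := by
    by_contra! h
    exact hbt.not_gt (le_antisymm hba h ▸ ha)
  obtain ⟨c, rfl⟩ := exists_add_of_le hba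
  refine ⟨b, c, i, rfl, hbt, ?_⟩
  rw [← Nat.cast_one, ← latticeWeight_single, ← map_add]
  by_contra! hle
  have hstep : b + Pi.single i 1 ≤ b + c := by
    refine add_le_add_right (fun j => ?_) b
    rcases eq_or_ne j i with rfl | hj
    · simpa [Nat.one_le_iff_ne_zero, Nat.pos_iff_ne_zero] using hi
    · simp [hj]
  simpa using hmax ⟨hstep, hle⟩ le_self_add i

lemma latticeWeight_add_sum_le (hlam : ∀ i, lam i ≠ 0) (a : Fin n → ℕ) :
    latticeWeight lam a + ∑ i, (1 : ℝ) / lam i ≤ (∑ i, a i / lam i : ℕ) + n := by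
  have hterm (i : Fin n) : (a i : ℝ) / lam i + 1 / lam i ≤ (a i / lam i : ℕ) + 1 := by
    have hpos : (0 : ℝ) < lam i := by exact_mod_cast Nat.pos_of_ne_zero (hlam i)
    rw [← add_div, div_le_iff₀ hpos]
    rw [add_mul, one_mul]
    exact_mod_cast Nat.lt_div_mul_add (a := a i) (Nat.pos_of_ne_zero (hlam i))
  simpa [latticeWeight_apply, Finset.sum_add_distrib] using
    Finset.sum_le_sum fun i (_ : i ∈ Finset.univ) => hterm i

theorem exists_add_eq_latticeWeight_le (hlam : ∀ i, lam i ≠ 0) {k m : ℕ} (hn : n ≤ k * m + 1)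
    {a : Fin n → ℕ} (ha : latticeWeight lam a ≤ k * (m + 1)) :
    ∃ b c, b + c = a ∧ latticeWeight lam b ≤ k ∧ latticeWeight lam c ≤ k * m := by
  by_cases hak : latticeWeight lam a ≤ k
  · exact ⟨a, 0, add_zero a, hak, by rw [map_zero]; positivity⟩
  by_cases hquot : k ≤ ∑ i, a i / lam i
  · obtain ⟨b, c, rfl, hb⟩ := exists_add_eq_latticeWeight_eq hlam hquot
    rw [map_add] at ha
    exact ⟨b, c, rfl, hb.le, by linarith⟩
  · obtain ⟨b, c, i, rfl, hb, hlt⟩ :=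
      exists_add_eq_latticeWeight_le_lt (Nat.cast_nonneg k) (not_le.mp hak)
    refine ⟨b, c, rfl, hb, ?_⟩
    have hle := latticeWeight_add_sum_le hlam (b + c)
    have hi : (1 : ℝ) / lam i ≤ ∑ j, (1 : ℝ) / lam j :=
      Finset.single_le_sum (f := fun j => (1 : ℝ) / lam j) (fun j _ => by positivity)
        (Finset.mem_univ i)
    have hquot' : ((∑ j, (b + c) j / lam j : ℕ) : ℝ) + 1 ≤ k := by
      exact_mod_cast not_le.mp hquot
    have hn' : (n : ℝ) ≤ k * m + 1 := by exact_mod_cast hn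
    rw [map_add] at hle
    linarith

end Splitting

section Normality

variable {n : ℕ} {lam : Fin n → ℕ}

lemma IsIDP.succ_dilate_rectSimplex (hlam : ∀ i, lam i ≠ 0) {k m : ℕ} (hk : k ≠ 0) (hm : m ≠ 0)
    (hn : n ≤ k * m + 1) (h : IsIDP m (dilate k (rectSimplex lam))) :
    IsIDP (m + 1) (dilate k (rectSimplex lam)) := by
  rw [isIDP_dilate_rectSimplex_iff hlam hk (Nat.succ_ne_zero m)]
  intro a ha
  obtain ⟨b, c, rfl, hb, hc⟩ := exists_add_eq_latticeWeight_le hlam hn (by exact_mod_cast ha)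
  obtain ⟨f, hf, rfl⟩ := (isIDP_dilate_rectSimplex_iff hlam hk hm).mp h c hc
  exact ⟨Fin.cons b f, Fin.cases hb hf, by simp [Fin.sum_univ_succ]⟩

theorem isNormal_dilate_rectSimplex_iff (hlam : ∀ i, lam i ≠ 0) {k : ℕ} (hk : k ≠ 0) :
    IsNormal (dilate k (rectSimplex lam)) ↔
      ∀ m, m ≠ 0 → k * m + 1 < n → IsIDP (m + 1) (dilate k (rectSimplex lam)) := by
  refine ⟨fun h m _ _ => h (m + 1) (by omega), fun h m hm => ?_⟩
  induction m, hm using Nat.le_induction with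
  | base => exact isIDP_one _
  | succ m hm ih =>
    have hm0 : m ≠ 0 := Nat.one_le_iff_ne_zero.mp hm
    rcases lt_or_ge (k * m + 1) n with hlt | hge
    · exact h m hm0 hlt
    · exact ih.succ_dilate_rectSimplex hlam hk hm0 hge

theorem isNormal_dilate_rectSimplex (hlam : ∀ i, lam i ≠ 0) {k : ℕ} (hk : k ≠ 0) (hn : n ≤ k + 1) :
    IsNormal (dilate k (rectSimplex lam)) := by
  refine (isNormal_dilate_rectSimplex_iff hlam hk).mpr fun m hm hlt => absurd hlt ?_
  have hkm : k ≤ k * m := Nat.le_mul_of_pos_right k (Nat.pos_of_ne_zero hm)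
  omega

theorem munorm_rectSimplex_eq_succ_iff {lam : Fin (n + 2) → ℕ} (hlam : ∀ i, lam i ≠ 0) :
    munorm (rectSimplex lam) = n + 1 ↔ ¬ IsNormal (dilate n (rectSimplex lam)) := by
  have hlarge (k : ℕ) (hk : n + 1 ≤ k) : IsNormal (dilate k (rectSimplex lam)) :=
    isNormal_dilate_rectSimplex hlam (by omega) (by omega)
  have hle : munorm (rectSimplex lam) ≤ n + 1 := (munorm_le_iff ⟨_, hlarge⟩).mpr hlarge
  have hsmall : munorm (rectSimplex lam) ≤ n ↔ IsNormal (dilate n (rectSimplex lam)) := by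
    rw [munorm_le_iff ⟨_, hlarge⟩]
    refine ⟨fun h => h n le_rfl, fun h k hk => ?_⟩
    rcases hk.eq_or_lt with rfl | hlt
    · exact h
    · exact hlarge k hlt
  rw [← hsmall]
  omega

theorem isNormal_dilate_one_rectSimplex_iff_of_fin_three {lam : Fin 3 → ℕ} (hlam : ∀ i, lam i ≠ 0) :
    IsNormal (dilate 1 (rectSimplex lam)) ↔ ∀ a, latticeWeight lam a ≤ 2 →
      ∃ b c, b + c = a ∧ latticeWeight lam b ≤ 1 ∧ latticeWeight lam c ≤ 1 := by
  have hIDP : IsNormal (dilate 1 (rectSimplex lam)) ↔ IsIDP 2 (dilate 1 (rectSimplex lam)) := by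
    rw [isNormal_dilate_rectSimplex_iff hlam one_ne_zero]
    refine ⟨fun h => h 1 one_ne_zero (by norm_num), fun h m hm hlt => ?_⟩
    obtain rfl : m = 1 := by omega
    exact h
  rw [hIDP, isIDP_dilate_rectSimplex_iff hlam one_ne_zero two_ne_zero]
  simp only [Nat.cast_one, Nat.cast_ofNat, one_mul, Fin.sum_univ_two]
  refine forall₂_congr fun a _ => ⟨?_, ?_⟩
  · rintro ⟨f, hf, hsum⟩
    exact ⟨f 0, f 1, hsum.symm, hf 0, hf 1⟩
  · rintro ⟨b, c, hsum, hb, hc⟩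
    exact ⟨![b, c], Fin.forall_fin_two.mpr ⟨hb, hc⟩, hsum.symm⟩

end Normality

section TwoThreeP

variable {p : ℕ}

lemma two_three_ne_zero (hp : p ≠ 0) (i : Fin 3) : (![2, 3, p] : Fin 3 → ℕ) i ≠ 0 := by
  fin_cases i <;> simp [hp]

lemma latticeWeight_two_three_le_iff (hp : p ≠ 0) (a : Fin 3 → ℕ) (t : ℕ) :
    latticeWeight ![2, 3, p] a ≤ t ↔ p * (3 * a 0 + 2 * a 1) + 6 * a 2 ≤ 6 * p * t := by
  have hp' : (0 : ℝ) < 6 * p := by positivity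
  have hscale : latticeWeight ![2, 3, p] a * (6 * p) =
      (p * (3 * a 0 + 2 * a 1) + 6 * a 2 : ℕ) := by
    simp only [latticeWeight_apply, Fin.sum_univ_three, Matrix.cons_val_zero, Matrix.cons_val_one,
      Matrix.cons_val, Nat.cast_ofNat, Nat.cast_add, Nat.cast_mul]
    field_simp
    ring
  rw [← mul_le_mul_iff_left₀ hp', hscale, mul_comm (t : ℝ)]
  exact_mod_cast Iff.rfl

lemma latticeWeight_two_three_le_one_iff (hp : p ≠ 0) (a : Fin 3 → ℕ) :
    latticeWeight ![2, 3, p] a ≤ 1 ↔ p * (3 * a 0 + 2 * a 1) + 6 * a 2 ≤ 6 * p := by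
  simpa using latticeWeight_two_three_le_iff hp a 1

theorem exists_add_eq_latticeWeight_two_three_le_one (hp : p ≠ 0) (hmod : p % 6 ≠ 5)
    {a : Fin 3 → ℕ} (ha : latticeWeight ![2, 3, p] a ≤ 2) :
    ∃ b c, b + c = a ∧ latticeWeight ![2, 3, p] b ≤ 1 ∧ latticeWeight ![2, 3, p] c ≤ 1 := by
  by_cases hquot : 1 ≤ ∑ i, a i / (![2, 3, p] : Fin 3 → ℕ) i
  · obtain ⟨b, c, rfl, hb⟩ := exists_add_eq_latticeWeight_eq (two_three_ne_zero hp) hquot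
    rw [Nat.cast_one] at hb
    rw [map_add] at ha
    exact ⟨b, c, rfl, hb.le, by linarith⟩
  obtain ⟨h0, h1, h2⟩ : a 0 < 2 ∧ a 1 < 3 ∧ a 2 < p := by
    simpa [Fin.sum_univ_three, hp, and_assoc] using hquot
  simp only [latticeWeight_two_three_le_one_iff hp]
  by_cases hface : 3 * a 0 + 2 * a 1 ≤ 6
  · refine ⟨![a 0, a 1, 0], ![0, 0, a 2], ?_, ?_, ?_⟩
    · ext i
      fin_cases i <;> simp
    · simpa [mul_comm p] using Nat.mul_le_mul_right p hface
    · simpa using h2.le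
  · obtain ⟨ha0, ha1⟩ : a 0 = 1 ∧ a 1 = 2 := by omega
    have hroom : a 2 ≤ p / 2 + p / 3 := by
      have hscaled := (latticeWeight_two_three_le_iff hp a 2).mp (by exact_mod_cast ha)
      rw [ha0, ha1] at hscaled
      omega
    have hsplit : min (a 2) (p / 2) + (a 2 - p / 2) = a 2 := by omega
    refine ⟨![1, 0, min (a 2) (p / 2)], ![0, 2, a 2 - p / 2], ?_, ?_, ?_⟩
    · ext i
      fin_cases i <;> simp [ha0, ha1, hsplit]
    · simp only [Matrix.cons_val_zero, Matrix.cons_val_one, Matrix.cons_val]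
      omega
    · simp only [Matrix.cons_val_zero, Matrix.cons_val_one, Matrix.cons_val]
      omega

theorem one_lt_latticeWeight_two_three_of_add_eq (hmod : p % 6 = 5) {b c : Fin 3 → ℕ}
    (hsum : b + c = ![1, 2, 5 * p / 6]) (hb : latticeWeight ![2, 3, p] b ≤ 1) :
    1 < latticeWeight ![2, 3, p] c := by
  have hp : p ≠ 0 := by omega
  by_contra! hc
  rw [latticeWeight_two_three_le_one_iff hp] at hb hc
  have h0 : b 0 + c 0 = 1 := congrFun hsum 0
  have h1 : b 1 + c 1 = 2 := congrFun hsum 1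
  have h2 : b 2 + c 2 = 5 * p / 6 := congrFun hsum 2
  obtain ⟨hb0, hc0⟩ | ⟨hb0, hc0⟩ : b 0 = 0 ∧ c 0 = 1 ∨ b 0 = 1 ∧ c 0 = 0 := by omega
  all_goals
    obtain ⟨hb1, hc1⟩ | ⟨hb1, hc1⟩ | ⟨hb1, hc1⟩ :
      b 1 = 0 ∧ c 1 = 2 ∨ b 1 = 1 ∧ c 1 = 1 ∨ b 1 = 2 ∧ c 1 = 0 := by omega
    all_goals
      rw [hb0, hb1] at hb
      rw [hc0, hc1] at hc
      omega

theorem isNormal_dilate_one_rectSimplex_two_three_iff (hp : p ≠ 0) :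
    IsNormal (dilate 1 (rectSimplex ![2, 3, p])) ↔ p % 6 ≠ 5 := by
  rw [isNormal_dilate_one_rectSimplex_iff_of_fin_three (two_three_ne_zero hp)]
  refine ⟨fun h hmod => ?_,
    fun hmod a ha => exists_add_eq_latticeWeight_two_three_le_one hp hmod ha⟩
  have hweight : latticeWeight ![2, 3, p] ![1, 2, 5 * p / 6] ≤ (2 : ℕ) := by
    rw [latticeWeight_two_three_le_iff hp]
    simp only [Matrix.cons_val_zero, Matrix.cons_val_one, Matrix.cons_val]
    omega
  obtain ⟨b, c, hsum, hb, hc⟩ := h _ (by exact_mod_cast hweight)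
  exact hc.not_gt (one_lt_latticeWeight_two_three_of_add_eq hmod hsum hb)

end TwoThreeP

theorem stmt_14_general (p : ℕ) (hp : p ≠ 0) :
    munorm (rectSimplex ![2, 3, p]) = 2 ↔ p % 6 = 5 := by
  rw [munorm_rectSimplex_eq_succ_iff (n := 1) (two_three_ne_zero hp),
    isNormal_dilate_one_rectSimplex_two_three_iff hp, not_not]

/-- For a prime `p ≥ 5`, the simplex `Δ(2, 3, p)` is maximally
non-normal (`μ_norm = 2`) iff `p ≡ 2 (mod 3)`. -/
theorem stmt_14 (p : ℕ) (hp : p.Prime) (hp5 : 5 ≤ p) :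
    munorm (rectSimplex ![2, 3, p]) = 2 ↔ p % 3 = 2 := by
  have hodd : p % 2 = 1 := hp.eq_two_or_odd.resolve_left (by omega)
  rw [stmt_14_general p hp.ne_zero]
  omega
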